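/- arXiv:2502.20958 — 2 statements merged into one kernel-verified Lean document; each statement's English description precedes it below -/
import Mathlib

section
/- Every factor of a good word is good: if x, y, z are words (x, z possibly empty, y nonempty) such that the concatenation xyz is good, then y is good. -/
/-! The order `≺` is compatible with concatenation: `w ≺ y` implies `xwz ≺ xyz`
(`PrecLt.append_append`). Since `B` turns concatenation into multiplication, the linear map
`r ↦ B_x r B_z` sends `B_y` to `B_{xyz}` and each `B_w` with `w ≺ y` to `B_{xwz}` with
`xwz ≺ xyz`. So a linear dependence showing that `y` is not good is carried to one showing that
`xyz` is not good. -/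

/-- The lexicographic order on words over the alphabet `v_0 < v_1 < ⋯ < v_{n-1}`
(indexed by `Fin n`), in which a word is smaller than any word having it as a proper prefix. -/
def LexLt {n : ℕ} (x y : List (Fin n)) : Prop := List.Lex (· < ·) x y

/-- The order `≺` : `x ≺ y` iff `ℓ(x) < ℓ(y)`, or `ℓ(x) = ℓ(y)` and `x > y` lexicographically. -/
def PrecLt {n : ℕ} (x y : List (Fin n)) : Prop :=
  x.length < y.length ∨ (x.length = y.length ∧ LexLt y x)

/-- The order `≼` : `x ≼ y` iff `x ≺ y` or `x = y`. -/
def PrecLe {n : ℕ} (x y : List (Fin n)) : Prop := PrecLt x y ∨ x = y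

/-- A nonempty word is Lyndon if it is lexicographically strictly smaller than every proper
nonempty suffix of itself. -/
def IsLyndon {n : ℕ} (l : List (Fin n)) : Prop :=
  l ≠ [] ∧ ∀ k : ℕ, 0 < k → k < l.length → LexLt l (l.drop k)

/-- `B_w = b_{i_1} ⋯ b_{i_k} ∈ R` for the word `w = v_{i_1} ⋯ v_{i_k}` (`B_w = 1` for `w = []`). -/
def Bword {n : ℕ} {R : Type*} [Monoid R] (b : Fin n → R) (w : List (Fin n)) : R :=
  (w.map b).prod

/-- A word `g` is good if `B_g` does not lie in the `K`-linear span of the `B_w` with `w ≺ g`. -/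
def IsGood (K : Type*) {n : ℕ} {R : Type*} [Field K] [Ring R] [Algebra K R]
    (b : Fin n → R) (g : List (Fin n)) : Prop :=
  Bword b g ∉ Submodule.span K (Bword b '' {w | PrecLt w g})

/-- Between words of equal length a lexicographic comparison is decided at a differing letter, so
it survives appending arbitrary words on the right. -/
lemma LexLt.append_right {n : ℕ} {u v : List (Fin n)} (h : LexLt u v)
    (hl : u.length = v.length) (s t : List (Fin n)) : LexLt (u ++ s) (v ++ t) := by
  unfold LexLt at *
  induction h with
  | nil => simp at hl
  | cons _ ih => exact List.Lex.cons (ih (by simpa using hl))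
  | rel hab => exact List.Lex.rel hab

lemma LexLt.append_left {n : ℕ} {u v : List (Fin n)} (h : LexLt u v) (x : List (Fin n)) :
    LexLt (x ++ u) (x ++ v) := by
  induction x with
  | nil => exact h
  | cons a x ih => exact List.Lex.cons ih

lemma PrecLt.append_append {n : ℕ} {w y : List (Fin n)} (h : PrecLt w y) (x z : List (Fin n)) :
    PrecLt (x ++ w ++ z) (x ++ y ++ z) := by
  rcases h with h | ⟨hl, h⟩
  · left
    simp only [List.length_append]
    omega
  · right
    refine ⟨by simp [hl], ?_⟩
    exact (h.append_left x).append_right (by simp [hl]) z z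

lemma Bword_append {n : ℕ} {R : Type*} [Monoid R] (b : Fin n → R) (u v : List (Fin n)) :
    Bword b (u ++ v) = Bword b u * Bword b v := by
  simp [Bword]

/-- Every factor of a good word is good. -/
theorem factor_of_good_isGood {n : ℕ} (K : Type*) [Field K] {R : Type*} [Ring R] [Algebra K R]
    (b : Fin n → R) (hgen : Algebra.adjoin K (Set.range b) = ⊤)
    (x y z : List (Fin n)) (hy : y ≠ []) (h : IsGood K b (x ++ y ++ z)) :
    IsGood K b y := by
  intro hmem
  apply h
  -- The linear map `r ↦ B_x * r * B_z`.
  let f : R →ₗ[K] R :=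
    (LinearMap.mulRight K (Bword b z)).comp (LinearMap.mulLeft K (Bword b x))
  have hf : ∀ w, f (Bword b w) = Bword b (x ++ w ++ z) := fun w => by
    simp [f, Bword_append, mul_assoc]
  have hmap := Submodule.mem_map_of_mem (f := f) hmem
  rw [hf, Submodule.map_span] at hmap
  refine Submodule.span_mono ?_ hmap
  rintro _ ⟨_, ⟨w, hw, rfl⟩, rfl⟩
  exact ⟨x ++ w ++ z, PrecLt.append_append hw x z, (hf w).symm⟩
end

section
/- For every Lyndon word l, one has [l] = l + Σ_w b_w w in T, where the sum runs over words w with ℓ(w) = ℓ(l) and w > l lexicographically, and all coefficients b_w lie in ℤ[q, q^{-1}]. -/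
/-- The bilinear pairing `(|x|, |y|)` of the `ℕΠ`-degrees of two words, induced by the
symmetric matrix `M = ((α_i, α_j))_{i,j}`. -/
def wpair {n : ℕ} (M : Matrix (Fin n) (Fin n) ℤ) (x y : List (Fin n)) : ℤ :=
  (x.map (fun i => (y.map (fun j => M i j)).sum)).sum

/-- The monomial in the free algebra `T` over `ℤ[q,q⁻¹]` corresponding to a word. -/
noncomputable def monoT {n : ℕ} (w : List (Fin n)) :
    FreeAlgebra (LaurentPolynomial ℤ) (Fin n) :=
  (w.map (FreeAlgebra.ι (LaurentPolynomial ℤ))).prod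

open scoped Classical in
/-- The `q⁻¹`-bracketing `[l]` of a Lyndon word `l` : `[l] = l` when `ℓ(l) = 1` and
`[l] = [l₁][l₂] - q^{-(|l₁|,|l₂|)} [l₂][l₁]` where `l = l₁l₂` is the co-standard factorization,
`l₁` being the longest Lyndon proper prefix of `l`. -/
noncomputable def bracketT {n : ℕ} (M : Matrix (Fin n) (Fin n) ℤ) :
    List (Fin n) → FreeAlgebra (LaurentPolynomial ℤ) (Fin n)
  | l =>
    if h : l.length ≤ 1 then monoT l
    else
      let k := max 1 (min (l.length - 1)
        (Nat.findGreatest (fun k => IsLyndon (l.take k)) (l.length - 1)))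
      have hk1 : 1 ≤ k := le_max_left _ _
      have hk2 : k ≤ l.length - 1 := max_le (by omega) (min_le_left _ _)
      have h1 : (l.take k).length < l.length := by rw [List.length_take]; omega
      have h2 : (l.drop k).length < l.length := by rw [List.length_drop]; omega
      bracketT M (l.take k) * bracketT M (l.drop k) -
        LaurentPolynomial.T (R := ℤ) (-(wpair M (l.take k) (l.drop k))) •
          (bracketT M (l.drop k) * bracketT M (l.take k))
  termination_by l => l.length
  decreasing_by all_goals assumption

/-! ### Lexicographic order and concatenation -/

lemma append_lt_append_iff {n : ℕ} : ∀ {a b : List (Fin n)} (x y : List (Fin n)),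
    a.length = b.length → (a ++ x < b ++ y ↔ a < b ∨ a = b ∧ x < y)
  | [], [], x, y, _ => by simp
  | i :: a, j :: b, x, y, h => by
    have ih := append_lt_append_iff (a := a) (b := b) x y (by simpa using h)
    simp only [List.cons_append, List.cons_lt_cons_iff, ih, List.cons.injEq]
    tauto
  | [], _ :: _, _, _, h => by simp at h
  | _ :: _, [], _, _, h => by simp at h

/-- If `b` is at most as long as `a`, then `a < b` is decided at an actual letter and
is unaffected by appending words. -/
lemma append_lt_append_of_lt {n : ℕ} : ∀ {a b : List (Fin n)} (x y : List (Fin n)),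
    a < b → b.length ≤ a.length → a ++ x < b ++ y
  | _, [], _, _, h, _ => by simp at h
  | [], _ :: _, _, _, _, hl => by simp at hl
  | i :: a, j :: b, x, y, h, hl => by
    have ih := append_lt_append_of_lt (a := a) (b := b) x y
    simp only [List.cons_append, List.cons_lt_cons_iff] at h ⊢
    rcases h with h | ⟨h, h'⟩
    · exact Or.inl h
    · exact Or.inr ⟨h, ih h' (by simpa using hl)⟩

lemma append_lt_append_left {n : ℕ} (a : List (Fin n)) {x y : List (Fin n)} (h : x < y) :
    a ++ x < a ++ y :=
  (append_lt_append_iff x y rfl).2 (Or.inr ⟨rfl, h⟩)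

lemma lt_append_self {n : ℕ} (a : List (Fin n)) {x : List (Fin n)} (h : x ≠ []) :
    a < a ++ x := by
  have : ([] : List (Fin n)) < x := by
    cases x with
    | nil => exact absurd rfl h
    | cons i x => exact List.nil_lt_cons i x
  simpa using append_lt_append_left a this

/-- The two ways in which `a < b` can hold: proper prefix, or a first differing letter. -/
lemma lt_cases {n : ℕ} : ∀ {a b : List (Fin n)}, a < b →
    (∃ z, z ≠ [] ∧ b = a ++ z) ∨
      ∃ p c d r s, a = p ++ c :: r ∧ b = p ++ d :: s ∧ c < d
  | _, [], h => by simp at h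
  | [], j :: b, _ => Or.inl ⟨j :: b, by simp, rfl⟩
  | i :: a, j :: b, h => by
    rw [List.cons_lt_cons_iff] at h
    rcases h with h | ⟨rfl, h⟩
    · exact Or.inr ⟨[], i, j, a, b, rfl, rfl, h⟩
    · rcases lt_cases h with ⟨z, hz, rfl⟩ | ⟨p, c, d, r, s, rfl, rfl, hcd⟩
      · exact Or.inl ⟨z, hz, rfl⟩
      · exact Or.inr ⟨i :: p, c, d, r, s, rfl, rfl, hcd⟩

/-! ### Lyndon words -/

lemma lyndon_iff {n : ℕ} (l : List (Fin n)) :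
    IsLyndon l ↔ l ≠ [] ∧ ∀ u v, l = u ++ v → u ≠ [] → v ≠ [] → l < v := by
  refine and_congr_right fun _ => ⟨fun h u v hl hu hv => ?_, fun h k hk hkl => ?_⟩
  · have hu' := List.length_pos_iff.2 hu
    have hv' := List.length_pos_iff.2 hv
    have := h u.length hu' (by rw [hl, List.length_append]; omega)
    have hd : l.drop u.length = v := by rw [hl]; simp
    rw [hd] at this
    exact this
  · refine h (l.take k) (l.drop k) (List.take_append_drop k l).symm ?_ ?_
    · rw [← List.length_pos_iff, List.length_take]; omega
    · rw [← List.length_pos_iff, List.length_drop]; omega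

lemma lyndon_append {n : ℕ} {a b : List (Fin n)} (ha : IsLyndon a) (hb : IsLyndon b)
    (hab : a < b) : IsLyndon (a ++ b) := by
  rw [lyndon_iff] at ha hb ⊢
  obtain ⟨ha0, ha⟩ := ha
  obtain ⟨hb0, hb⟩ := hb
  have key : a ++ b < b := by
    rcases lt_cases hab with ⟨z, hz, hbz⟩ | ⟨p, c, d, r, s, rfl, rfl, hcd⟩
    · calc a ++ b < a ++ z := append_lt_append_left a (hb a z hbz ha0 hz)
        _ = b := hbz.symm
    · rw [List.append_assoc]
      exact append_lt_append_left p (by simp [List.cons_lt_cons_iff, hcd])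
  refine ⟨by simp [ha0], fun u v huv hu hv => ?_⟩
  rcases List.append_eq_append_iff.1 huv with ⟨w, hw, hw'⟩ | ⟨w, hw, hw'⟩
  · -- the cut lies in `b` (or at the seam, when `w = []`)
    by_cases h : w = []
    · subst h
      simp only [List.nil_append] at hw'
      exact hw' ▸ key
    · exact key.trans (hb w v hw' h hv)
  · -- the cut lies in `a`
    by_cases h : w = []
    · subst h
      simp only [List.nil_append] at hw'
      exact hw' ▸ key
    · rw [hw']
      refine append_lt_append_of_lt b b (ha u w hw hu h) ?_
      rw [hw, List.length_append]; omega

/-- Raising the last letter of a nonempty prefix of a Lyndon word gives a Lyndon word. -/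
lemma lyndon_raise {n : ℕ} {x r : List (Fin n)} {c d : Fin n} (h : IsLyndon (x ++ c :: r))
    (hcd : c < d) : IsLyndon (x ++ [d]) := by
  rw [lyndon_iff] at h ⊢
  refine ⟨by simp, fun u v huv hu hv => ?_⟩
  obtain ⟨v', e, rfl⟩ : ∃ v' e, v = v' ++ [e] :=
    ⟨v.dropLast, v.getLast hv, (List.dropLast_append_getLast hv).symm⟩
  rw [← List.append_assoc] at huv
  obtain ⟨hx, he⟩ := List.append_inj' huv rfl
  obtain rfl : d = e := by simpa using he
  have h2 := h.2 u (v' ++ c :: r) (by simp [hx]) hu (by simp)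
  -- `x` is longer than `v'`, so it splits as `x₁fx₂` with `x₁` as long as `v'`
  have hlen : v'.length < x.length := by
    have := List.length_pos_iff.2 hu
    rw [hx, List.length_append]; omega
  obtain ⟨x₁, f, x₂, hx', hl⟩ : ∃ x₁ f x₂, x = x₁ ++ f :: x₂ ∧ x₁.length = v'.length :=
    ⟨x.take v'.length, x[v'.length], x.drop (v'.length + 1), by simp, by simp; omega⟩
  rw [hx', List.append_assoc, append_lt_append_iff _ _ hl, List.cons_append,
    List.cons_lt_cons_iff] at h2
  rw [hx', List.append_assoc, append_lt_append_iff _ _ hl, List.cons_append,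
    List.cons_lt_cons_iff]
  rcases h2 with h2 | ⟨h2, h3 | ⟨h3, -⟩⟩
  · exact Or.inl h2
  · exact Or.inr ⟨h2, Or.inl (h3.trans hcd)⟩
  · exact Or.inr ⟨h2, Or.inl (h3 ▸ hcd)⟩

/-- A nonempty word that is not Lyndon has a proper Lyndon suffix smaller than itself. -/
lemma exists_lyndon_suffix {n : ℕ} (w : List (Fin n)) (hw : w ≠ []) (h : ¬ IsLyndon w) :
    ∃ u s, w = u ++ s ∧ u ≠ [] ∧ IsLyndon s ∧ s < w := by
  induction hN : w.length using Nat.strong_induction_on generalizing w with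
  | _ N ih =>
    have h' := h
    rw [lyndon_iff] at h'
    push Not at h'
    obtain ⟨u, v, huv, hu, hv, hlt⟩ := h' hw
    have hlen : v.length < w.length := by
      have := List.length_pos_iff.2 hu
      rw [huv, List.length_append]; omega
    have hvw : v < w := lt_of_le_of_ne hlt (by rintro rfl; omega)
    by_cases hL : IsLyndon v
    · exact ⟨u, v, huv, hu, hL, hvw⟩
    · obtain ⟨u', s, hs, hu', hsL, hsv⟩ := ih v.length (by omega) v hv hL rfl
      exact ⟨u ++ u', s, by rw [huv, hs, List.append_assoc], by simp [hu], hsL, hsv.trans hvw⟩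

/-- The right factor of the co-standard factorization of a Lyndon word is Lyndon. -/
lemma lyndon_drop {n : ℕ} {a b : List (Fin n)} (hl : IsLyndon (a ++ b)) (ha : IsLyndon a)
    (hb : b ≠ [])
    (hmax : ∀ p q, b = p ++ q → p ≠ [] → q ≠ [] → ¬ IsLyndon (a ++ p)) : IsLyndon b := by
  by_contra hL
  obtain ⟨u, s, hus, hu, hs, hsb⟩ := exists_lyndon_suffix b hb hL
  have hlt : a < s := (lt_append_self a hb).trans
    (((lyndon_iff _).1 hl).2 (a ++ u) s (by rw [hus, List.append_assoc]) (by simp [hu]) hs.1)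
  have has := lyndon_append ha hs hlt
  rcases lt_cases hsb with ⟨z, hz, hbz⟩ | ⟨p, c, d, r, t, hsp, hbp, hcd⟩
  · exact hmax s z hbz hs.1 hz has
  · rw [hsp, ← List.append_assoc] at has
    have hd := lyndon_raise has hcd
    rw [List.append_assoc] at hd
    refine hmax (p ++ [d]) t (by simp [hbp]) (by simp) ?_ hd
    rintro rfl
    -- `t = []` would make the proper suffix `s` at least as long as `b`
    have h1 := congrArg List.length hus
    have h2 := congrArg List.length hsp
    have h3 := congrArg List.length hbp
    have := List.length_pos_iff.2 hu
    simp only [List.length_append, List.length_cons, List.length_nil] at h1 h2 h3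
    omega

/-! ### Triangularity -/

/-- The span in `T` of the words of the same length as `l` that are `> l`. -/
noncomputable def upperSpan {n : ℕ} (l : List (Fin n)) :
    Submodule (LaurentPolynomial ℤ) (FreeAlgebra (LaurentPolynomial ℤ) (Fin n)) :=
  Submodule.span _ (monoT '' {w | w.length = l.length ∧ l < w})

/-- The span in `T` of the words of the same length as `l` that are `≥ l`. -/
noncomputable def upperSpanLe {n : ℕ} (l : List (Fin n)) :
    Submodule (LaurentPolynomial ℤ) (FreeAlgebra (LaurentPolynomial ℤ) (Fin n)) :=
  Submodule.span _ (monoT '' {w | w.length = l.length ∧ l ≤ w})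

lemma monoT_append {n : ℕ} (a b : List (Fin n)) : monoT (a ++ b) = monoT a * monoT b := by
  simp [monoT]

lemma monoT_mem {n : ℕ} (a : List (Fin n)) : monoT a ∈ upperSpanLe a :=
  Submodule.subset_span ⟨a, ⟨rfl, le_rfl⟩, rfl⟩

lemma upperSpan_le {n : ℕ} (a : List (Fin n)) : upperSpan a ≤ upperSpanLe a :=
  Submodule.span_mono (Set.image_mono fun _ h => ⟨h.1, h.2.le⟩)

lemma mul_mem_left {n : ℕ} {a b : List (Fin n)} {x y} (hx : x ∈ upperSpan a)
    (hy : y ∈ upperSpanLe b) : x * y ∈ upperSpan (a ++ b) := by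
  have h := Submodule.mul_mem_mul hx hy
  rw [upperSpan, upperSpanLe, Submodule.span_mul_span] at h
  refine Submodule.span_mono ?_ h
  rintro _ ⟨_, ⟨u, hu, rfl⟩, _, ⟨v, hv, rfl⟩, rfl⟩
  exact ⟨u ++ v, ⟨by simp [hu.1, hv.1],
    (append_lt_append_iff _ _ hu.1.symm).2 (Or.inl hu.2)⟩, monoT_append u v⟩

lemma mul_mem_right {n : ℕ} {a b : List (Fin n)} {x y} (hx : x ∈ upperSpanLe a)
    (hy : y ∈ upperSpan b) : x * y ∈ upperSpan (a ++ b) := by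
  have h := Submodule.mul_mem_mul hx hy
  rw [upperSpan, upperSpanLe, Submodule.span_mul_span] at h
  refine Submodule.span_mono ?_ h
  rintro _ ⟨_, ⟨u, hu, rfl⟩, _, ⟨v, hv, rfl⟩, rfl⟩
  refine ⟨u ++ v, ⟨by simp [hu.1, hv.1],
    (append_lt_append_iff _ _ hu.1.symm).2 ?_⟩, monoT_append u v⟩
  rcases hu.2.lt_or_eq with h | h
  · exact Or.inl h
  · exact Or.inr ⟨h, hv.2⟩

/-- Leading terms are multiplicative. -/
lemma mul_sub_mem {n : ℕ} {a b : List (Fin n)} {x y} (hx : x - monoT a ∈ upperSpan a)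
    (hy : y - monoT b ∈ upperSpan b) : x * y - monoT (a ++ b) ∈ upperSpan (a ++ b) := by
  have e : x * y - monoT (a ++ b) =
      (x - monoT a) * (y - monoT b) + (x - monoT a) * monoT b + monoT a * (y - monoT b) := by
    simp only [monoT_append, mul_sub, sub_mul]; abel
  rw [e]
  exact add_mem (add_mem (mul_mem_left hx (upperSpan_le b hy)) (mul_mem_left hx (monoT_mem b)))
    (mul_mem_right (monoT_mem a) hy)

/-- The recursive step: the hypothesis `a ++ b < b` makes the second term of the `q`-commutator
contribute only words larger than `a ++ b`. -/
lemma commutator_sub_mem {n : ℕ} {a b : List (Fin n)} {x y} (t : LaurentPolynomial ℤ)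
    (hx : x - monoT a ∈ upperSpan a) (hy : y - monoT b ∈ upperSpan b) (hlt : a ++ b < b)
    (ha : a ≠ []) :
    x * y - t • (y * x) - monoT (a ++ b) ∈ upperSpan (a ++ b) := by
  have hba : a ++ b < b ++ a := hlt.trans (lt_append_self b ha)
  have h2 : y * x ∈ upperSpan (a ++ b) := by
    have h3 : y * x ∈ upperSpanLe (b ++ a) := by
      have := add_mem (upperSpan_le _ (mul_sub_mem hy hx)) (monoT_mem (b ++ a))
      simpa using this
    refine Submodule.span_mono (Set.image_mono fun w hw => ?_) h3
    exact ⟨by rw [hw.1]; simp [add_comm], hba.trans_le hw.2⟩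
  rw [sub_right_comm]
  exact sub_mem (mul_sub_mem hx hy) (Submodule.smul_mem _ _ h2)

/-- One step of the recursion for `bracketT` at a Lyndon word, along its co-standard
factorization `l = ab`. The truncations guarding the cut position in `bracketT` are inactive
because the first letter is a Lyndon prefix. -/
lemma exists_costandard {n : ℕ} (M : Matrix (Fin n) (Fin n) ℤ) (l : List (Fin n))
    (hl : IsLyndon l) (h1 : ¬ l.length ≤ 1) :
    ∃ a b, l = a ++ b ∧ IsLyndon a ∧ IsLyndon b ∧ bracketT M l =
      bracketT M a * bracketT M b -
        LaurentPolynomial.T (R := ℤ) (-(wpair M a b)) • (bracketT M b * bracketT M a) := by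
  classical
  set g := Nat.findGreatest (fun k => IsLyndon (l.take k)) (l.length - 1) with hg
  have hone : IsLyndon (l.take 1) := by
    refine ⟨by rw [← List.length_pos_iff, List.length_take]; omega, fun k hk hk' => ?_⟩
    rw [List.length_take] at hk'
    omega
  have hg1 : 1 ≤ g := Nat.le_findGreatest (by omega) hone
  have hg2 : g ≤ l.length - 1 := Nat.findGreatest_le _
  have hgL : IsLyndon (l.take g) :=
    Nat.findGreatest_spec (P := fun k => IsLyndon (l.take k)) (m := 1) (by omega) hone
  refine ⟨l.take g, l.drop g, (List.take_append_drop g l).symm, hgL, ?_, ?_⟩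
  · refine lyndon_drop (by rwa [List.take_append_drop]) hgL ?_ ?_
    · rw [← List.length_pos_iff, List.length_drop]; omega
    · intro p q hpq hp hq hL
      have hp' := List.length_pos_iff.2 hp
      have hq' := List.length_pos_iff.2 hq
      have hlen := congrArg List.length hpq
      rw [List.length_drop, List.length_append] at hlen
      have htake : l.take (g + p.length) = l.take g ++ p := by
        rw [List.take_add, hpq]; simp
      have : g + p.length ≤ g :=
        Nat.le_findGreatest (P := fun k => IsLyndon (l.take k)) (by omega) (by rwa [htake])
      omega
  · have hk : max 1 (min (l.length - 1) g) = g := by omega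
    rw [bracketT, dif_neg h1]
    simp only [← hg, hk]

lemma bracketT_sub_mem {n : ℕ} (M : Matrix (Fin n) (Fin n) ℤ) (l : List (Fin n))
    (hl : IsLyndon l) : bracketT M l - monoT l ∈ upperSpan l := by
  induction hN : l.length using Nat.strong_induction_on generalizing l with
  | _ N ih =>
    by_cases h1 : l.length ≤ 1
    · rw [bracketT, dif_pos h1, sub_self]
      exact zero_mem _
    · obtain ⟨a, b, rfl, ha, hb, e⟩ := exists_costandard M l hl h1
      have ha' := List.length_pos_iff.2 ha.1
      have hb' := List.length_pos_iff.2 hb.1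
      rw [List.length_append] at hN
      rw [e]
      exact commutator_sub_mem _ (ih _ (by omega) a ha rfl) (ih _ (by omega) b hb rfl)
        (((lyndon_iff _).1 hl).2 a b rfl ha.1 hb.1) ha.1

/-- For every Lyndon word `l`, `[l] = l + Σ b_w w` in `T`, the sum running over words `w` with
`ℓ(w) = ℓ(l)` and `w > l` lexicographically, with coefficients `b_w ∈ ℤ[q,q⁻¹]`. -/
theorem bracket_triangular {n : ℕ} (M : Matrix (Fin n) (Fin n) ℤ)
    (hM : ∀ i j, M i j = M j i) (l : List (Fin n)) (hl : IsLyndon l) :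
    ∃ (s : Finset (List (Fin n))) (c : List (Fin n) → LaurentPolynomial ℤ),
      (∀ w ∈ s, w.length = l.length ∧ LexLt l w) ∧
      bracketT M l = monoT l + ∑ w ∈ s, c w • monoT w := by
  have h := bracketT_sub_mem M l hl
  rw [upperSpan, Finsupp.mem_span_image_iff_linearCombination] at h
  obtain ⟨c, hc, hsum⟩ := h
  refine ⟨c.support, c, fun w hw => hc hw, ?_⟩
  rw [Finsupp.linearCombination_apply, Finsupp.sum] at hsum
  rw [hsum, add_sub_cancel]
end
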